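/- For natural number n and complex a, b, c, d (with 1−b, 1−c, 1−d, 1+a−c avoiding nonpositive-integer degeneracies making denominators vanish): ∑_{k=0}^{n} (−n)_k (a)_k (b−n)_k / ((c−n)_k (d−n)_k k!) = ((1+a−c)_n (1−b)_n / ((1−c)_n (1−d)_n)) · ∑_{k=0}^{n} (−n)_k (d−b)_k (1−c)_k / ((1+a−c)_k (1−b)_k k!). -/

import Mathlib

open Complex Finset

/-- Pochhammer symbol `(x)_k = x (x+1) ⋯ (x+k-1)`. -/
noncomputable def poch (x : ℂ) (k : ℕ) : ℂ := ∏ i ∈ Finset.range k, (x + i)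

/-- Beta function `B(x,y) = Γ(x) Γ(y) / Γ(x+y)`. -/
noncomputable def cBeta (x y : ℂ) : ℂ :=
  Complex.Gamma x * Complex.Gamma y / Complex.Gamma (x + y)

theorem poch_succ (x : ℂ) (k : ℕ) : poch x (k + 1) = poch x k * (x + k) := by
  simp [poch, Finset.prod_range_succ]

theorem poch_zero (x : ℂ) : poch x 0 = 1 := by simp [poch]

theorem poch_add (x : ℂ) (j k : ℕ) : poch x (j + k) = poch x j * poch (x + j) k := by
  unfold poch
  rw [Finset.prod_range_add]
  congr 1
  apply Finset.prod_congr rfl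
  intro i _
  push_cast
  ring

theorem poch_reflect (x : ℂ) (k : ℕ) : poch x k = (-1) ^ k * poch (1 - x - k) k := by
  unfold poch
  rw [← Finset.prod_range_reflect (fun i : ℕ => (1 - x - k + (i : ℂ))) k]
  have : ((-1 : ℂ)) ^ k = ∏ _i ∈ Finset.range k, (-1 : ℂ) := by simp
  rw [this, ← Finset.prod_mul_distrib]
  apply Finset.prod_congr rfl
  intro i hi
  have hi' : i + 1 ≤ k := Finset.mem_range.1 hi
  have e : k - 1 - i = k - (i + 1) := by omega
  rw [e, Nat.cast_sub hi']
  push_cast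
  ring

theorem poch_ne_zero (x : ℂ) (h : ∀ k : ℕ, x ≠ -(k : ℂ)) (k : ℕ) : poch x k ≠ 0 := by
  unfold poch
  apply Finset.prod_ne_zero_iff.2
  intro i _ h0
  exact h i (eq_neg_of_add_eq_zero_left h0)

theorem vander_anti (x y : ℂ) (n : ℕ) :
    ∑ p ∈ Finset.HasAntidiagonal.antidiagonal n, (n.choose p.1 : ℂ) * (poch x p.1 * poch y p.2)
      = poch (x + y) n := by
  induction n with
  | zero => simp [poch_zero]
  | succ n ih =>
    rw [Finset.sum_antidiagonal_choose_succ_mul (fun i j => poch x i * poch y j) n,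
      poch_succ, ← ih, Finset.sum_mul, ← Finset.sum_add_distrib]
    apply Finset.sum_congr rfl
    rintro ⟨i, j⟩ hp
    have hp' : i + j = n := Finset.HasAntidiagonal.mem_antidiagonal.1 hp
    subst hp'
    have e : (i + j).choose j = (i + j).choose i := (Nat.choose_symm_add).symm
    simp only [poch_succ, e]
    push_cast
    ring

theorem vander (x y : ℂ) (n : ℕ) :
    ∑ k ∈ Finset.range (n + 1), (n.choose k : ℂ) * (poch x k * poch y (n - k))
      = poch (x + y) n := by
  rw [← vander_anti, Finset.Nat.sum_antidiagonal_eq_sum_range_succ_mk]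

theorem sum_ext_zero (f : ℕ → ℂ) (m n : ℕ) (h : m ≤ n) (hf : ∀ k, m < k → f k = 0) :
    ∑ k ∈ Finset.range (n + 1), f k = ∑ k ∈ Finset.range (m + 1), f k := by
  symm
  apply Finset.sum_subset
  · intro k hk
    simp only [Finset.mem_range] at *
    omega
  · intro k _ hk
    simp only [Finset.mem_range] at hk
    exact hf k (by omega)

theorem ratio (B D : ℂ) (hB : ∀ k : ℕ, B ≠ -(k : ℂ)) (m n : ℕ) (h : m ≤ n) :
    poch D m / poch B m = ∑ j ∈ Finset.range (n + 1),
      (-1) ^ j * (m.choose j : ℂ) * (poch (B - D) j / poch B j) := by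
  rw [sum_ext_zero _ m n h (by intro k hk; simp [Nat.choose_eq_zero_of_lt hk]),
    div_eq_iff (poch_ne_zero B hB m), poch_reflect D m]
  have e : (1 - D - m : ℂ) = (B - D) + (1 - B - m) := by ring
  rw [e, ← vander, Finset.mul_sum, Finset.sum_mul]
  apply Finset.sum_congr rfl
  intro j hj
  obtain ⟨l, rfl⟩ := Nat.exists_eq_add_of_le (Nat.lt_succ_iff.1 (Finset.mem_range.1 hj))
  have hBj := poch_ne_zero B hB j
  have e2 : (1 - (B + j) - l : ℂ) = 1 - B - ((j + l : ℕ) : ℂ) := by push_cast; ring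
  rw [poch_add B j l, poch_reflect (B + j) l, e2, Nat.add_sub_cancel_left, pow_add]
  field_simp

theorem choose_fact (k i : ℕ) :
    (k + i).choose k * k.factorial * i.factorial = (k + i).factorial := by
  have h := Nat.choose_mul_factorial_mul_factorial (Nat.le_add_right k i)
  rwa [Nat.add_sub_cancel_left] at h

theorem core (n : ℕ) (a B C D : ℂ) (hB : ∀ k : ℕ, B ≠ -(k : ℂ))
    (hA : ∀ k : ℕ, a + C ≠ -(k : ℂ)) :
    ∑ k ∈ Finset.range (n + 1),
      (n.choose k : ℂ) * poch a k * poch C (n - k) * (poch D (n - k) / poch B (n - k))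
    = poch (a + C) n * ∑ j ∈ Finset.range (n + 1),
      (-1) ^ j * (n.choose j : ℂ) * (poch (B - D) j / poch B j) * (poch C j / poch (a + C) j) := by
  have s1 : ∀ k ∈ Finset.range (n + 1),
      (n.choose k : ℂ) * poch a k * poch C (n - k) * (poch D (n - k) / poch B (n - k))
      = ∑ j ∈ Finset.range (n + 1), (n.choose k : ℂ) * poch a k * poch C (n - k) *
        ((-1) ^ j * ((n - k).choose j : ℂ) * (poch (B - D) j / poch B j)) := by
    intro k _
    rw [ratio B D hB (n - k) n (Nat.sub_le _ _), Finset.mul_sum]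
  rw [Finset.sum_congr rfl s1, Finset.sum_comm, Finset.mul_sum]
  apply Finset.sum_congr rfl
  intro j hj
  obtain ⟨l, rfl⟩ := Nat.exists_eq_add_of_le (Nat.lt_succ_iff.1 (Finset.mem_range.1 hj))
  rw [sum_ext_zero _ l (j + l) (Nat.le_add_left _ _) (by
    intro k hk
    have : j + l - k < j ∨ j + l < k := by omega
    have : (j + l - k).choose j = 0 ∨ (j + l).choose k = 0 := by
      rcases this with h | h
      · exact Or.inl (Nat.choose_eq_zero_of_lt h)
      · exact Or.inr (Nat.choose_eq_zero_of_lt h)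
    rcases this with h | h <;> simp [h])]
  have hAj := poch_ne_zero _ hA j
  have e : poch (a + C) (j + l) = poch (a + C) j * poch (a + (C + j)) l := by
    rw [poch_add, add_assoc]
  have e2 : poch (a + C) (j + l) * ((-1) ^ j * ((j + l).choose j : ℂ) *
      (poch (B - D) j / poch B j) * (poch C j / poch (a + C) j))
      = ((-1) ^ j * ((j + l).choose j : ℂ) * (poch (B - D) j / poch B j) * poch C j) *
        poch (a + (C + j)) l := by
    rw [e]
    field_simp
  rw [e2, ← vander, Finset.mul_sum]
  apply Finset.sum_congr rfl
  intro k hk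
  obtain ⟨i, rfl⟩ := Nat.exists_eq_add_of_le (Nat.lt_succ_iff.1 (Finset.mem_range.1 hk))
  have e3 : j + (k + i) - k = j + i := by omega
  have e4 : (j + (k + i)).choose k * (j + i).choose j
      = (j + (k + i)).choose j * (k + i).choose k := by
    have h1 := choose_fact k (j + i)
    have h2 := choose_fact j i
    have h3 := choose_fact j (k + i)
    have h4 := choose_fact k i
    have e5 : k + (j + i) = j + (k + i) := by omega
    rw [e5] at h1
    have hpos : 0 < k.factorial * j.factorial * i.factorial := by positivity
    apply Nat.eq_of_mul_eq_mul_right hpos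
    rw [← h2] at h1
    rw [← h4] at h3
    linarith
  have e4' : ((j + (k + i)).choose k : ℂ) * ((j + i).choose j : ℂ)
      = ((j + (k + i)).choose j : ℂ) * ((k + i).choose k : ℂ) := by exact_mod_cast e4
  rw [e3, Nat.add_sub_cancel_left, poch_add C j i]
  linear_combination (poch a k * poch C j * poch (C + j) i * (-1) ^ j *
    (poch (B - D) j / poch B j)) * e4'

theorem poch_neg_nat (k i : ℕ) :
    poch (-((k + i : ℕ) : ℂ)) k = (-1) ^ k * ((k + i).choose k : ℂ) * (k.factorial : ℂ) := by
  rw [poch_reflect]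
  have e : (1 - -((k + i : ℕ) : ℂ) - k) = 1 + i := by push_cast; ring
  have hp : ∀ m : ℕ, poch 1 m = (m.factorial : ℂ) := by
    intro m
    induction m with
    | zero => simp [poch_zero]
    | succ m ih => rw [poch_succ, ih, Nat.factorial_succ]; push_cast; ring
  have h := poch_add 1 i k
  rw [hp, hp] at h
  have h4 := choose_fact k i
  have h4' : ((k + i).choose k : ℂ) * (k.factorial : ℂ) * (i.factorial : ℂ)
    = ((k + i).factorial : ℂ) := by exact_mod_cast h4
  have hi : (i.factorial : ℂ) ≠ 0 := by exact_mod_cast Nat.factorial_ne_zero i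
  rw [e, mul_assoc]
  congr 1
  apply mul_left_cancel₀ hi
  rw [← h, add_comm i k, ← h4']
  ring

theorem poch_sub_nat (b : ℂ) (k i : ℕ) :
    poch (b - ((k + i : ℕ) : ℂ)) k * poch (1 - b) i = (-1) ^ k * poch (1 - b) (k + i) := by
  rw [poch_reflect, add_comm k i, poch_add (1 - b) i k]
  have e : (1 - (b - ((i + k : ℕ) : ℂ)) - k) = 1 - b + i := by push_cast; ring
  rw [e]
  ring

theorem terminating_transform_86 (n : ℕ) (a b c d : ℂ)
    (h1 : ∀ k : ℕ, 1 - b ≠ -(k : ℂ)) (h2 : ∀ k : ℕ, 1 - c ≠ -(k : ℂ))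
    (h3 : ∀ k : ℕ, 1 - d ≠ -(k : ℂ)) (h4 : ∀ k : ℕ, 1 + a - c ≠ -(k : ℂ)) :
    ∑ k ∈ Finset.range (n + 1),
        poch (-(n : ℂ)) k * poch a k * poch (b - n) k /
          (poch (c - n) k * poch (d - n) k * (Nat.factorial k : ℂ)) =
      (poch (1 + a - c) n * poch (1 - b) n / (poch (1 - c) n * poch (1 - d) n)) *
        ∑ k ∈ Finset.range (n + 1),
          poch (-(n : ℂ)) k * poch (d - b) k * poch (1 - c) k /
            (poch (1 + a - c) k * poch (1 - b) k * (Nat.factorial k : ℂ)) := by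
  have hA : ∀ k : ℕ, a + (1 - c) ≠ -(k : ℂ) := by
    intro k h
    exact h4 k (by rw [← h]; ring)
  have key := core n a (1 - b) (1 - c) (1 - d) h1 hA
  have eA : a + (1 - c) = 1 + a - c := by ring
  have eB : (1 - b) - (1 - d) = d - b := by ring
  rw [eA, eB] at key
  have nB := poch_ne_zero _ h1
  have nC := poch_ne_zero _ h2
  have nD := poch_ne_zero _ h3
  have nA := poch_ne_zero _ h4
  have hR : ∀ k ∈ Finset.range (n + 1),
      poch (-(n : ℂ)) k * poch (d - b) k * poch (1 - c) k /
            (poch (1 + a - c) k * poch (1 - b) k * (Nat.factorial k : ℂ))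
      = (-1) ^ k * (n.choose k : ℂ) * (poch (d - b) k / poch (1 - b) k) *
        (poch (1 - c) k / poch (1 + a - c) k) := by
    intro k hk
    obtain ⟨i, rfl⟩ := Nat.exists_eq_add_of_le (Nat.lt_succ_iff.1 (Finset.mem_range.1 hk))
    have hf : (k.factorial : ℂ) ≠ 0 := by exact_mod_cast Nat.factorial_ne_zero k
    have := nB k
    have := nA k
    rw [poch_neg_nat]
    field_simp
  have hL : ∀ k ∈ Finset.range (n + 1),
      poch (-(n : ℂ)) k * poch a k * poch (b - n) k /
          (poch (c - n) k * poch (d - n) k * (Nat.factorial k : ℂ))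
      = (poch (1 - b) n / (poch (1 - c) n * poch (1 - d) n)) *
        ((n.choose k : ℂ) * poch a k * poch (1 - c) (n - k) *
          (poch (1 - d) (n - k) / poch (1 - b) (n - k))) := by
    intro k hk
    obtain ⟨i, rfl⟩ := Nat.exists_eq_add_of_le (Nat.lt_succ_iff.1 (Finset.mem_range.1 hk))
    have hf : (k.factorial : ℂ) ≠ 0 := by exact_mod_cast Nat.factorial_ne_zero k
    have b1 := nB i
    have c1 := nC i
    have d1 := nD i
    have c2 := nC (k + i)
    have d2 := nD (k + i)
    have eb := eq_div_of_mul_eq b1 (poch_sub_nat b k i)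
    have ec := eq_div_of_mul_eq c1 (poch_sub_nat c k i)
    have ed := eq_div_of_mul_eq d1 (poch_sub_nat d k i)
    rw [poch_neg_nat, eb, ec, ed, Nat.add_sub_cancel_left]
    have hs : ((-1 : ℂ)) ^ k ≠ 0 := pow_ne_zero _ (by norm_num)
    field_simp
  rw [Finset.sum_congr rfl hL, Finset.sum_congr rfl hR, ← Finset.mul_sum, key]
  ring
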